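/- Let {G_x}_{x=1}^{4} be any semi-SIC POVM with parameter b on ℂ². Then b ∈ (1/16, 1/12], and there exist a 2×2 unitary matrix U and a permutation σ of {1,2,3,4} such that U G_{σ(x)} U† = E_x for x = 1,2,3,4, where {E₁, E₂, E₃, E₄} is the canonical family: E₁ := a₋·ψ₁ψ₁*, E₂ := a₋·ψ₂ψ₂*, E₃ := a₊·ψ₃ψ₃*, E₄ := a₊·ψ₄ψ₄* with a± := (1 ± √(1 − 12b))/2, r := 2√b/(1 − √(1 − 12b)), θ := arccos(√(1 − 8b − √(1 − 12b))/(4√b)), ψ₁ := (1, 0), ψ₂ := (r, √(1 − r²)), ψ₃ := (1/√3, −√(2/3)·e^{iθ}), ψ₄ := (1/√3, −√(2/3)·e^{−iθ}). -/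

import Mathlib

open Matrix
open scoped ComplexOrder

noncomputable section

/-- The rank-one matrix `ψψ*` with entries `ψ i * conj (ψ j)`. -/
def outer (ψ : Fin 2 → ℂ) : Matrix (Fin 2) (Fin 2) ℂ :=
  Matrix.vecMulVec ψ (star ψ)

/-- `a₊ = (1 + √(1 − 12b))/2`. -/
def aP (b : ℝ) : ℝ := (1 + Real.sqrt (1 - 12 * b)) / 2

/-- `a₋ = (1 − √(1 − 12b))/2`. -/
def aM (b : ℝ) : ℝ := (1 - Real.sqrt (1 - 12 * b)) / 2

/-- `r = 2√b / (1 − √(1 − 12b))`. -/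
def rr (b : ℝ) : ℝ := 2 * Real.sqrt b / (1 - Real.sqrt (1 - 12 * b))

/-- `θ = arccos( √(1 − 8b − √(1 − 12b)) / (4√b) )`. -/
def th (b : ℝ) : ℝ :=
  Real.arccos (Real.sqrt (1 - 8 * b - Real.sqrt (1 - 12 * b)) / (4 * Real.sqrt b))

/-- `ψ₁ = (1, 0)`. -/
def psi1 : Fin 2 → ℂ := ![1, 0]

/-- `ψ₂ = (r, √(1 − r²))`. -/
def psi2 (b : ℝ) : Fin 2 → ℂ := ![(rr b : ℂ), ((Real.sqrt (1 - (rr b) ^ 2) : ℝ) : ℂ)]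

/-- `ψ₃ = (1/√3, −√(2/3)·e^{iθ})`. -/
def psi3 (b : ℝ) : Fin 2 → ℂ :=
  ![((1 / Real.sqrt 3 : ℝ) : ℂ),
    -((Real.sqrt (2 / 3) : ℝ) : ℂ) * Complex.exp ((th b : ℂ) * Complex.I)]

/-- `ψ₄ = (1/√3, −√(2/3)·e^{−iθ})`. -/
def psi4 (b : ℝ) : Fin 2 → ℂ :=
  ![((1 / Real.sqrt 3 : ℝ) : ℂ),
    -((Real.sqrt (2 / 3) : ℝ) : ℂ) * Complex.exp (-(th b : ℂ) * Complex.I)]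

/-- The canonical family `E₁ = a₋ψ₁ψ₁*, E₂ = a₋ψ₂ψ₂*, E₃ = a₊ψ₃ψ₃*, E₄ = a₊ψ₄ψ₄*`. -/
def canonE (b : ℝ) : Fin 4 → Matrix (Fin 2) (Fin 2) ℂ :=
  ![(aM b : ℂ) • outer psi1,
    (aM b : ℂ) • outer (psi2 b),
    (aP b : ℂ) • outer (psi3 b),
    (aP b : ℂ) • outer (psi4 b)]

/-- A semi-SIC POVM with parameter `b` on `ℂ^d`. -/
def IsSemiSIC (d : ℕ) (b : ℝ) (E : Fin (d ^ 2) → Matrix (Fin d) (Fin d) ℂ) : Prop :=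
  (∀ x, (E x).PosSemidef) ∧
  (∀ x, (E x).rank = 1) ∧
  (∑ x, E x = 1) ∧
  (∀ A : Matrix (Fin d) (Fin d) ℂ, A.IsHermitian → A ∈ Submodule.span ℝ (Set.range E)) ∧
  (∀ x y, x ≠ y → (E x * E y).trace = (b : ℂ))

/-!
Expanding `tr (E x * 1)` with `∑ y, E y = 1` shows that in dimension two every weight
`t = tr (E x)` is a root of `t ^ 2 - t + 3 * b`, whose roots `a₋ ≤ a₊` have sum `1`; as the four
weights sum to `2`, each root occurs twice. Two distinct effects of weight `a₋` have nonzero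
difference, so its Hilbert–Schmidt norm gives `b < a₋ ^ 2`, that is `1 / 16 < b`.

For uniqueness, conjugate by a unitary so that the first effect becomes `diag(a₋, 0)` and the second
one has a nonnegative off-diagonal entry; this determines the second effect. The Bloch vectors of
the last two effects have a prescribed length and prescribed inner products with the first two, so
they are determined up to reflection in the plane of the first two. That reflection is
transposition of matrices, and it exchanges `E₃` and `E₄`.
-/

section RankOne

variable {m n K : Type*} [Fintype n] [Field K]

lemma exists_eq_vecMulVec_of_rank_le_one [Finite m] {A : Matrix m n K} (hA : A.rank ≤ 1) :
    ∃ u w, A = vecMulVec u w := by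
  classical
  obtain ⟨⟨u, _⟩, hu⟩ := finrank_le_one_iff.1 hA
  choose w hw using fun j => hu ⟨A.mulVecLin (Pi.single j 1), LinearMap.mem_range_self _ _⟩
  refine ⟨u, w, ext fun i j => ?_⟩
  simpa [vecMulVec_apply, mul_comm] using (congrFun (congrArg Subtype.val (hw j)) i).symm

lemma trace_mul_self_of_rank_le_one {A : Matrix n n K} (hA : A.rank ≤ 1) :
    (A * A).trace = A.trace ^ 2 := by
  obtain ⟨u, w, rfl⟩ := exists_eq_vecMulVec_of_rank_le_one hA
  rw [vecMulVec_mul_vecMulVec, vecMulVec_smul, trace_smul, trace_vecMulVec, dotProduct_comm w,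
    smul_eq_mul, sq]

lemma det_eq_zero_of_rank_le_one [DecidableEq n] [Nontrivial n] {A : Matrix n n K}
    (hA : A.rank ≤ 1) : A.det = 0 := by
  obtain ⟨u, w, rfl⟩ := exists_eq_vecMulVec_of_rank_le_one hA
  exact det_vecMulVec u w

end RankOne

section UnitaryConjugation

variable {n R : Type*} [Fintype n] [DecidableEq n] [CommRing R] [StarRing R]

lemma trace_conjStarAlgAut (U : unitaryGroup n R) (M : Matrix n n R) :
    (Unitary.conjStarAlgAut R _ U M).trace = M.trace := by
  rw [Unitary.conjStarAlgAut_apply, trace_mul_cycle, Unitary.coe_star_mul_self, one_mul]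

lemma det_conjStarAlgAut (U : unitaryGroup n R) (M : Matrix n n R) :
    (Unitary.conjStarAlgAut R _ U M).det = M.det := by
  rw [Unitary.conjStarAlgAut_apply, det_mul_right_comm, Unitary.mul_star_self_of_mem U.2, one_mul]

end UnitaryConjugation

lemma star_fin_two_of {R : Type*} [Star R] (a b c d : R) :
    star !![a, b; c, d] = !![star a, star c; star b, star d] := by
  ext i j
  fin_cases i <;> fin_cases j <;> rfl

lemma exists_conjStarAlgAut_eq_of_det_eq_zero {𝕜 : Type*} [RCLike 𝕜]
    {M : Matrix (Fin 2) (Fin 2) 𝕜} (hM : M.IsHermitian) (hdet : M.det = 0) :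
    ∃ U : unitaryGroup (Fin 2) 𝕜,
      Unitary.conjStarAlgAut 𝕜 _ U M = !![M.trace, 0; 0, 0] := by
  set V := star hM.eigenvectorUnitary
  obtain ⟨p, q, hV⟩ : ∃ p q : 𝕜, Unitary.conjStarAlgAut 𝕜 _ V M = !![p, 0; 0, q] :=
    ⟨_, _, hM.conjStarAlgAut_star_eigenvectorUnitary.trans (diagonal_fin_two _)⟩
  have hpq : p * q = 0 := by
    simpa [hV, hdet] using det_conjStarAlgAut V M
  have htr : p + q = M.trace := by
    simpa [hV, trace_fin_two] using trace_conjStarAlgAut V M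
  rcases mul_eq_zero.1 hpq with rfl | rfl
  · let S : unitaryGroup (Fin 2) 𝕜 := ⟨!![0, 1; 1, 0], by
      simp [mem_unitaryGroup_iff, star_fin_two_of, ← one_fin_two]⟩
    refine ⟨S * V, ?_⟩
    rw [Unitary.conjStarAlgAut_mul_apply, hV, Unitary.conjStarAlgAut_apply, ← htr]
    simp [S, star_fin_two_of, funext_iff]
  · exact ⟨V, by rw [hV, ← htr, add_zero]⟩

lemma exists_diagonal_conjStarAlgAut_nonneg (N : Matrix (Fin 2) (Fin 2) ℂ) :
    ∃ U : unitaryGroup (Fin 2) ℂ,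
      (∀ t : ℂ, Unitary.conjStarAlgAut ℂ _ U !![t, 0; 0, 0] = !![t, 0; 0, 0]) ∧
      0 ≤ Unitary.conjStarAlgAut ℂ _ U N 0 1 := by
  obtain ⟨c, hc, hcN⟩ := Complex.exists_norm_eq_mul_self (N 0 1)
  have hcc : c * starRingEnd ℂ c = 1 := by
    simp [Complex.mul_conj, Complex.normSq_eq_norm_sq, hc]
  refine ⟨⟨!![c, 0; 0, 1], by
    simp [mem_unitaryGroup_iff, star_fin_two_of, ← one_fin_two, hcc]⟩, fun t => ?_, ?_⟩
  · simp [Unitary.conjStarAlgAut_apply, star_fin_two_of, funext_iff, mul_right_comm c t, hcc]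
  · simp [Unitary.conjStarAlgAut_apply, star_fin_two_of, mul_apply, vecMul, dotProduct, ← hcN]

lemma exists_conjStarAlgAut_eq_and_nonneg {M : Matrix (Fin 2) (Fin 2) ℂ} (hM : M.IsHermitian)
    (hdet : M.det = 0) (N : Matrix (Fin 2) (Fin 2) ℂ) :
    ∃ U : unitaryGroup (Fin 2) ℂ,
      Unitary.conjStarAlgAut ℂ _ U M = !![M.trace, 0; 0, 0] ∧
      0 ≤ Unitary.conjStarAlgAut ℂ _ U N 0 1 := by
  obtain ⟨V, hV⟩ := exists_conjStarAlgAut_eq_of_det_eq_zero hM hdet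
  obtain ⟨W, hW, hN⟩ := exists_diagonal_conjStarAlgAut_nonneg (Unitary.conjStarAlgAut ℂ _ V N)
  refine ⟨W * V, ?_, ?_⟩
  · rw [Unitary.conjStarAlgAut_mul_apply, hV, hW]
  · rwa [Unitary.conjStarAlgAut_mul_apply]

lemma trace_corner_mul {R : Type*} [Semiring R] (a : R) (M : Matrix (Fin 2) (Fin 2) R) :
    (!![a, 0; 0, 0] * M).trace = a * M 0 0 := by
  simp [trace_fin_two, vecMul, dotProduct]

lemma diag_eq_of_trace_eq {R : Type*} [Ring R] [IsDomain R] {M N : Matrix (Fin 2) (Fin 2) R}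
    {a : R} (ha : a ≠ 0) (htr : M.trace = N.trace)
    (h : (!![a, 0; 0, 0] * M).trace = (!![a, 0; 0, 0] * N).trace) :
    M 0 0 = N 0 0 ∧ M 1 1 = N 1 1 := by
  rw [trace_corner_mul, trace_corner_mul] at h
  have h₀ := mul_left_cancel₀ ha h
  exact ⟨h₀, by simpa [trace_fin_two, h₀] using htr⟩

lemma eq_of_isHermitian_fin_two {R : Type*} [Star R] {M N : Matrix (Fin 2) (Fin 2) R}
    (hM : M.IsHermitian) (hN : N.IsHermitian) (h₀ : M 0 0 = N 0 0) (h₁ : M 1 1 = N 1 1)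
    (h₀₁ : M 0 1 = N 0 1) : M = N := by
  have h₁₀ : M 1 0 = N 1 0 := by rw [← hM.apply, ← hN.apply, h₀₁]
  ext i j
  fin_cases i <;> fin_cases j <;> assumption

lemma normSq_zero_one_eq_of_det_eq {M N : Matrix (Fin 2) (Fin 2) ℂ} (hM : M.IsHermitian)
    (hN : N.IsHermitian) (hdet : M.det = N.det) (h₀ : M 0 0 = N 0 0) (h₁ : M 1 1 = N 1 1) :
    Complex.normSq (M 0 1) = Complex.normSq (N 0 1) := by
  rw [det_fin_two, det_fin_two, h₀, h₁, sub_right_inj, ← hM.apply 1 0, ← hN.apply 1 0] at hdet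
  simpa [Complex.mul_conj] using hdet

lemma eq_of_det_eq_of_nonneg {M N : Matrix (Fin 2) (Fin 2) ℂ} (hM : M.IsHermitian)
    (hN : N.IsHermitian) (hdet : M.det = N.det) (h₀ : M 0 0 = N 0 0) (h₁ : M 1 1 = N 1 1)
    (hM₀ : 0 ≤ M 0 1) (hN₀ : 0 ≤ N 0 1) : M = N := by
  obtain ⟨p, hp, hMp⟩ := RCLike.nonneg_iff_exists_ofReal.1 hM₀
  obtain ⟨q, hq, hNq⟩ := RCLike.nonneg_iff_exists_ofReal.1 hN₀
  have hpq : p = q := by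
    have := normSq_zero_one_eq_of_det_eq hM hN hdet h₀ h₁
    simpa [← hMp, ← hNq, Complex.normSq_ofReal, mul_self_inj hp hq] using this
  have h₀₁ : M 0 1 = N 0 1 := by rw [← hMp, ← hNq, hpq]
  exact eq_of_isHermitian_fin_two hM hN h₀ h₁ h₀₁

lemma eq_or_eq_transpose_of_det_eq {M N P : Matrix (Fin 2) (Fin 2) ℂ} (hM : M.IsHermitian)
    (hN : N.IsHermitian) (hP : P.IsHermitian) (hdet : M.det = N.det) (h₀ : M 0 0 = N 0 0)
    (h₁ : M 1 1 = N 1 1) (hP₀ : 0 < P 0 1) (htr : (P * M).trace = (P * N).trace) :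
    M = N ∨ M = Nᵀ := by
  have hre : (M 0 1).re = (N 0 1).re := by
    obtain ⟨hpos, him⟩ := Complex.lt_def.1 hP₀
    have hmul : (P 0 1).re * (M 0 1).re = (P 0 1).re * (N 0 1).re := by
      have := congrArg Complex.re htr
      simp only [trace_fin_two, mul_apply, Fin.sum_univ_two, ← hM.apply 1 0, ← hN.apply 1 0,
        ← hP.apply 1 0, h₀, h₁, ← him, Complex.add_re, Complex.mul_re, Complex.star_def,
        Complex.conj_re, Complex.conj_im, Complex.zero_im] at this
      linarith
    exact mul_left_cancel₀ hpos.ne' hmul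
  have him : (M 0 1).im ^ 2 = (N 0 1).im ^ 2 := by
    have := normSq_zero_one_eq_of_det_eq hM hN hdet h₀ h₁
    rw [Complex.normSq_apply, Complex.normSq_apply, hre] at this
    linarith
  rcases sq_eq_sq_iff_eq_or_eq_neg.1 him with him | him
  · exact .inl (eq_of_isHermitian_fin_two hM hN h₀ h₁ (Complex.ext hre him))
  · refine .inr (eq_of_isHermitian_fin_two hM hN.transpose h₀ h₁ ?_)
    rw [transpose_apply, ← hN.apply]
    exact Complex.ext hre him

lemma span_complex_eq_top_of_isHermitian {n : Type*} {S : Set (Matrix n n ℂ)}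
    (hS : ∀ A : Matrix n n ℂ, A.IsHermitian → A ∈ Submodule.span ℝ S) :
    Submodule.span ℂ S = ⊤ := by
  refine Submodule.eq_top_iff'.2 fun A => ?_
  have hmem : ∀ B : selfAdjoint (Matrix n n ℂ), (B : Matrix n n ℂ) ∈ Submodule.span ℂ S :=
    fun B => Submodule.span_le_restrictScalars ℝ ℂ S (hS B B.2)
  rw [← realPart_add_I_smul_imaginaryPart A]
  exact add_mem (hmem _) (Submodule.smul_mem _ _ (hmem _))

lemma normSq_add_mul_exp (x y θ : ℝ) :
    Complex.normSq (x + y * Complex.exp (θ * Complex.I)) =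
      x ^ 2 + y ^ 2 + 2 * x * y * Real.cos θ := by
  simp only [Complex.normSq_apply, Complex.add_re, Complex.add_im, Complex.re_ofReal_mul,
    Complex.im_ofReal_mul, Complex.ofReal_re, Complex.ofReal_im, Complex.exp_ofReal_mul_I_re,
    Complex.exp_ofReal_mul_I_im]
  linear_combination y ^ 2 * Real.sin_sq_add_cos_sq θ

lemma exists_perm_comp_eq {R : Type*} [CommRing R] [LinearOrder R] [IsStrictOrderedRing R]
    {t : Fin 4 → R} {p q : R} (hpq : p ≤ q) (ht : ∀ x, t x = p ∨ t x = q)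
    (hsum : ∑ x, t x = 2 * (p + q)) : ∃ σ : Equiv.Perm (Fin 4), t ∘ σ = ![p, p, q, q] := by
  refine ⟨Tuple.sort t, ?_⟩
  set u := t ∘ Tuple.sort t
  have hmono : Monotone u := Tuple.monotone_sort t
  have hval : ∀ x, u x = p ∨ u x = q := fun x => ht _
  have hp : ∀ x, p ≤ u x := fun x => (hval x).elim Eq.ge fun h => hpq.trans h.ge
  have hq : ∀ x, u x ≤ q := fun x => (hval x).elim (fun h => h.le.trans hpq) Eq.le
  have hsum' : u 0 + u 1 + u 2 + u 3 = 2 * (p + q) := by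
    rw [← hsum, ← Equiv.sum_comp (Tuple.sort t) t, Fin.sum_univ_four]
    rfl
  have h₁ : u 1 = p := (hval 1).elim id fun h => by
    linarith [hp 0, hq 1, hmono (show (1 : Fin 4) ≤ 2 by decide),
      hmono (show (1 : Fin 4) ≤ 3 by decide)]
  have h₀ : u 0 = p := (h₁ ▸ hmono (show (0 : Fin 4) ≤ 1 by decide)).antisymm (hp 0)
  have h₂ : u 2 = q := by linarith [hq 2, hq 3]
  have h₃ : u 3 = q := by linarith
  ext x
  fin_cases x <;> assumption

namespace IsSemiSIC

variable {d : ℕ} {b : ℝ} {E : Fin (d ^ 2) → Matrix (Fin d) (Fin d) ℂ}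

lemma isHermitian (hE : IsSemiSIC d b E) (x : Fin (d ^ 2)) : (E x).IsHermitian :=
  (hE.1 x).1

lemma rank_le_one (hE : IsSemiSIC d b E) (x : Fin (d ^ 2)) : (E x).rank ≤ 1 :=
  (hE.2.1 x).le

lemma trace_mul (hE : IsSemiSIC d b E) {x y : Fin (d ^ 2)} (hxy : x ≠ y) :
    (E x * E y).trace = b :=
  hE.2.2.2.2 x y hxy

lemma injective (hE : IsSemiSIC d b E) : Function.Injective E := by
  have hspan := span_complex_eq_top_of_isHermitian hE.2.2.2.1
  refine (linearIndependent_of_top_le_span_of_card_eq_finrank hspan.ge ?_).injective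
  simp [Module.finrank_matrix, sq]

lemma trace_pos (hE : IsSemiSIC d b E) (x : Fin (d ^ 2)) : 0 < (E x).trace := by
  refine (hE.1 x).trace_nonneg.lt_of_ne' fun h => ?_
  simpa [(hE.1 x).trace_eq_zero_iff.1 h] using hE.2.1 x

lemma ofReal_re_trace (hE : IsSemiSIC d b E) (x : Fin (d ^ 2)) :
    ((E x).trace.re : ℂ) = (E x).trace :=
  Complex.ext rfl (Complex.lt_def.1 (hE.trace_pos x)).2

lemma sum_re_trace (hE : IsSemiSIC d b E) : ∑ x, (E x).trace.re = d := by
  rw [← Complex.re_sum, ← trace_sum, hE.2.2.1]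
  simp

lemma re_trace_eq_sq_add (hE : IsSemiSIC d b E) (x : Fin (d ^ 2)) :
    (E x).trace.re = (E x).trace.re ^ 2 + (d ^ 2 - 1 : ℕ) * b := by
  have hC : (E x).trace = (E x).trace ^ 2 + (d ^ 2 - 1 : ℕ) * b := calc
    (E x).trace = ∑ y, (E x * E y).trace := by
      rw [← trace_sum, ← Finset.mul_sum, hE.2.2.1, mul_one]
    _ = (E x * E x).trace + ∑ _y ∈ Finset.univ.erase x, (b : ℂ) := by
      rw [← Finset.add_sum_erase _ _ (Finset.mem_univ x)]
      congr 1
      exact Finset.sum_congr rfl fun y hy => hE.trace_mul (Finset.ne_of_mem_erase hy).symm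
    _ = (E x).trace ^ 2 + (d ^ 2 - 1 : ℕ) * b := by
      simp [trace_mul_self_of_rank_le_one (hE.rank_le_one x)]
  rw [← hE.ofReal_re_trace] at hC
  exact_mod_cast hC

lemma two_mul_lt_sq_add_sq (hE : IsSemiSIC d b E) {x y : Fin (d ^ 2)} (hxy : x ≠ y) :
    2 * b < (E x).trace.re ^ 2 + (E y).trace.re ^ 2 := by
  set D := E x - E y
  have hDD : (Dᴴ * D).trace = ((E x).trace.re ^ 2 + (E y).trace.re ^ 2 - 2 * b : ℝ) := by
    rw [((hE.isHermitian x).sub (hE.isHermitian y)).eq]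
    push_cast
    simp only [D, sub_mul, mul_sub, trace_sub, hE.trace_mul hxy, hE.trace_mul hxy.symm,
      trace_mul_self_of_rank_le_one (hE.rank_le_one _), hE.ofReal_re_trace]
    ring
  have hD : (Dᴴ * D).trace ≠ 0 :=
    trace_conjTranspose_mul_self_eq_zero_iff.not.2 (sub_ne_zero.2 (hE.injective.ne hxy))
  have hpos : 0 < (Dᴴ * D).trace :=
    (posSemidef_conjTranspose_mul_self D).trace_nonneg.lt_of_ne hD.symm
  rw [hDD, Complex.zero_lt_real] at hpos
  linarith

end IsSemiSIC

section Weights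

variable {b : ℝ}

lemma aM_add_aP (b : ℝ) : aM b + aP b = 1 := by
  rw [aM, aP]
  ring

lemma aM_le_aP (b : ℝ) : aM b ≤ aP b := by
  have := Real.sqrt_nonneg (1 - 12 * b)
  rw [aM, aP]
  linarith

lemma aM_mul_aP (hb : b ≤ 1 / 12) : aM b * aP b = 3 * b := by
  have := Real.sq_sqrt (show 0 ≤ 1 - 12 * b by linarith)
  rw [aM, aP]
  linear_combination -this / 4

lemma eq_aM_or_eq_aP (hb : b ≤ 1 / 12) {t : ℝ} (ht : t = t ^ 2 + 3 * b) :
    t = aM b ∨ t = aP b := by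
  have : (t - aM b) * (t - aP b) = 0 := by
    linear_combination aM_mul_aP hb - t * aM_add_aP b - ht
  simpa [sub_eq_zero] using this

lemma aM_pos_iff : 0 < aM b ↔ 0 < b := by
  rw [aM, div_pos_iff_of_pos_right two_pos, sub_pos, Real.sqrt_lt' one_pos]
  constructor <;> intro h <;> linarith

lemma aM_sq_sub (hb : b ≤ 1 / 12) :
    aM b ^ 2 - b = (1 - 8 * b - √(1 - 12 * b)) / 2 := by
  rw [aM]
  linear_combination Real.sq_sqrt (show 0 ≤ 1 - 12 * b by linarith) / 4

lemma lt_aM_sq_iff (hb₀ : 0 ≤ b) (hb : b ≤ 1 / 12) : b < aM b ^ 2 ↔ 1 / 16 < b := by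
  rw [← sub_pos, aM_sq_sub hb, div_pos_iff_of_pos_right two_pos, sub_pos,
    Real.sqrt_lt' (by linarith)]
  constructor <;> intro h <;> nlinarith

end Weights

section CanonicalFamily

variable {b : ℝ}

lemma outer_apply (ψ : Fin 2 → ℂ) (i j : Fin 2) : outer ψ i j = ψ i * star (ψ j) :=
  rfl

lemma isHermitian_outer (ψ : Fin 2 → ℂ) : (outer ψ).IsHermitian := by
  rw [IsHermitian, outer, conjTranspose_vecMulVec, star_star]

lemma det_outer (ψ : Fin 2 → ℂ) : (outer ψ).det = 0 :=
  det_vecMulVec _ _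

lemma trace_outer (ψ : Fin 2 → ℂ) :
    (outer ψ).trace = (‖ψ 0‖ ^ 2 + ‖ψ 1‖ ^ 2 : ℝ) := by
  simp [trace_fin_two, outer_apply, Complex.mul_conj, Complex.normSq_eq_norm_sq]

lemma trace_outer_mul_outer (ψ φ : Fin 2 → ℂ) :
    (outer ψ * outer φ).trace = Complex.normSq (star ψ ⬝ᵥ φ) := by
  rw [outer, outer, vecMulVec_mul_vecMulVec, vecMulVec_smul, trace_smul, trace_vecMulVec,
    smul_eq_mul, ← Complex.mul_conj, starRingEnd_apply, ← star_dotProduct, dotProduct_comm ψ]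

lemma outer_star (ψ : Fin 2 → ℂ) : outer (star ψ) = (outer ψ)ᵀ := by
  rw [outer, outer, transpose_vecMulVec, star_star]

lemma star_psi3 (b : ℝ) : star (psi3 b) = psi4 b := by
  ext i
  fin_cases i <;> simp [psi3, psi4, ← Complex.exp_conj]

lemma isHermitian_canonE (b : ℝ) (x : Fin 4) : (canonE b x).IsHermitian := by
  fin_cases x <;> exact (isHermitian_outer _).smul (Complex.conj_ofReal _)

lemma det_canonE (b : ℝ) (x : Fin 4) : (canonE b x).det = 0 := by
  fin_cases x <;> simp [canonE, det_outer]

lemma canonE_zero (b : ℝ) : canonE b 0 = !![(aM b : ℂ), 0; 0, 0] := by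
  ext i j
  fin_cases i <;> fin_cases j <;> simp [canonE, outer_apply, psi1]

lemma canonE_one (b : ℝ) : canonE b 1 = (aM b : ℂ) • outer (psi2 b) :=
  rfl

lemma canonE_two (b : ℝ) : canonE b 2 = (aP b : ℂ) • outer (psi3 b) :=
  rfl

lemma canonE_three (b : ℝ) : canonE b 3 = (canonE b 2)ᵀ := by
  simp [canonE, ← star_psi3, outer_star]

lemma rr_eq (b : ℝ) : rr b = √b / aM b := by
  rw [rr, aM]
  field_simp

lemma rr_pos (hb : 0 < b) : 0 < rr b := by
  have := aM_pos_iff.2 hb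
  rw [rr_eq]
  positivity

lemma aM_sq_mul_rr_sq (hb : 0 < b) : aM b ^ 2 * rr b ^ 2 = b := by
  have := (aM_pos_iff.2 hb).ne'
  rw [rr_eq, div_pow, Real.sq_sqrt hb.le]
  field_simp

lemma pos_of_mem_Ioc (hb : b ∈ Set.Ioc (1 / 16 : ℝ) (1 / 12)) : 0 < b :=
  lt_trans (by norm_num) hb.1

lemma rr_sq_lt_one (hb : b ∈ Set.Ioc (1 / 16 : ℝ) (1 / 12)) : rr b ^ 2 < 1 := by
  have hb₀ := pos_of_mem_Ioc hb
  rw [rr_eq, div_pow, Real.sq_sqrt hb₀.le, div_lt_one (pow_pos (aM_pos_iff.2 hb₀) 2)]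
  exact (lt_aM_sq_iff hb₀.le hb.2).2 hb.1

lemma cos_th (hb : b ∈ Set.Ioc (1 / 16 : ℝ) (1 / 12)) :
    Real.cos (th b) = √2 * √(1 - rr b ^ 2) / (4 * rr b) := by
  have hb₀ := pos_of_mem_Ioc hb
  have ha := aM_pos_iff.2 hb₀
  have hnum : √(1 - 8 * b - √(1 - 12 * b)) = aM b * (√2 * √(1 - rr b ^ 2)) := by
    rw [← Real.sqrt_mul two_pos.le, ← Real.sqrt_sq ha.le, ← Real.sqrt_mul (sq_nonneg _)]
    congr 1
    linear_combination -2 * aM_sq_sub hb.2 + 2 * aM_sq_mul_rr_sq hb₀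
  have hle : √(1 - 8 * b - √(1 - 12 * b)) ≤ 4 * √b := by
    rw [Real.sqrt_le_left (by positivity), mul_pow, Real.sq_sqrt hb₀.le]
    linarith [Real.sqrt_nonneg (1 - 12 * b), hb.1]
  have hden : 0 < 4 * √b := by positivity
  have hneg : -1 ≤ √(1 - 8 * b - √(1 - 12 * b)) / (4 * √b) :=
    neg_one_lt_zero.le.trans (by positivity)
  rw [th, Real.cos_arccos hneg (div_le_one_of_le₀ hle hden.le), hnum, rr_eq]
  field_simp

lemma trace_outer_psi2 (hb : b ∈ Set.Ioc (1 / 16 : ℝ) (1 / 12)) :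
    (outer (psi2 b)).trace = 1 := by
  have := Real.sq_sqrt (sub_nonneg.2 (rr_sq_lt_one hb).le)
  simp [trace_outer, psi2, this]

lemma trace_outer_psi3 (b : ℝ) : (outer (psi3 b)).trace = 1 := by
  have h₀ : ‖psi3 b 0‖ ^ 2 = 1 / 3 := by simp [psi3]
  have h₁ : ‖psi3 b 1‖ ^ 2 = 2 / 3 := by simp [psi3, Complex.norm_exp_ofReal_mul_I, div_pow]
  rw [trace_outer, h₀, h₁]
  norm_num

lemma trace_canonE (hb : b ∈ Set.Ioc (1 / 16 : ℝ) (1 / 12)) (x : Fin 4) :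
    (canonE b x).trace = ((![aM b, aM b, aP b, aP b] x : ℝ) : ℂ) := by
  have htwo : (canonE b 2).trace = (aP b : ℂ) := by
    rw [canonE_two, trace_smul, trace_outer_psi3, smul_eq_mul, mul_one]
  fin_cases x
  · simp [canonE_zero, trace_fin_two]
  · simp [canonE_one, trace_smul, trace_outer_psi2 hb]
  · exact htwo
  · simpa [canonE_three] using htwo

lemma trace_canonE_zero_mul_one (hb : 0 < b) : (canonE b 0 * canonE b 1).trace = b := by
  have h : aM b * (aM b * (rr b * rr b)) = b := by
    linear_combination aM_sq_mul_rr_sq hb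
  rw [canonE_zero, trace_corner_mul]
  simpa [canonE_one, outer_apply, psi2] using mod_cast h

lemma trace_canonE_zero_mul_two (hb : b ≤ 1 / 12) : (canonE b 0 * canonE b 2).trace = b := by
  have h3 : (√3)⁻¹ * (√3)⁻¹ = (1 / 3 : ℝ) := by
    rw [← mul_inv, Real.mul_self_sqrt three_pos.le, one_div]
  have h : aM b * (aP b * ((√3)⁻¹ * (√3)⁻¹)) = b := by
    linear_combination (aM b * aP b) * h3 + aM_mul_aP hb / 3
  rw [canonE_zero, trace_corner_mul]
  simpa [canonE_two, outer_apply, psi3] using mod_cast h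

lemma normSq_psi2_psi3 (hb : b ∈ Set.Ioc (1 / 16 : ℝ) (1 / 12)) :
    Complex.normSq (star (psi2 b) ⬝ᵥ psi3 b) = 1 / 3 := by
  set s := √(1 - rr b ^ 2) with hs
  have hs_sq : s ^ 2 = 1 - rr b ^ 2 := Real.sq_sqrt (sub_nonneg.2 (rr_sq_lt_one hb).le)
  have h₂ : √2 ^ 2 = (2 : ℝ) := Real.sq_sqrt two_pos.le
  have h₃ : √3 ^ 2 = (3 : ℝ) := Real.sq_sqrt three_pos.le
  have hr := (rr_pos (pos_of_mem_Ioc hb)).ne'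
  have hdot : star (psi2 b) ⬝ᵥ psi3 b =
      (rr b / √3 : ℝ) + (-(s * (√2 / √3)) : ℝ) * Complex.exp (th b * Complex.I) := by
    simp only [psi2, psi3, vec2_dotProduct, Pi.star_apply, cons_val_zero, cons_val_one, hs,
      Real.sqrt_div two_pos.le, one_div, Complex.star_def, Complex.conj_ofReal]
    push_cast
    ring
  calc Complex.normSq (star (psi2 b) ⬝ᵥ psi3 b)
    _ = (rr b ^ 2 + √2 ^ 2 * s ^ 2 - √2 ^ 2 * s ^ 2 / 2) / √3 ^ 2 := by
      rw [hdot, normSq_add_mul_exp, cos_th hb]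
      field_simp
      ring
    _ = 1 / 3 := by
      rw [h₂, h₃, hs_sq]
      ring

lemma trace_canonE_one_mul_two (hb : b ∈ Set.Ioc (1 / 16 : ℝ) (1 / 12)) :
    (canonE b 1 * canonE b 2).trace = b := by
  have h : aM b * aP b * (1 / 3) = b := by
    linear_combination aM_mul_aP hb.2 / 3
  rw [canonE_one, canonE_two, smul_mul_smul_comm, trace_smul, trace_outer_mul_outer,
    normSq_psi2_psi3 hb, smul_eq_mul]
  exact_mod_cast h

lemma canonE_one_zero_one_pos (hb : b ∈ Set.Ioc (1 / 16 : ℝ) (1 / 12)) :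
    0 < canonE b 1 0 1 := by
  have hb₀ := pos_of_mem_Ioc hb
  have ha := aM_pos_iff.2 hb₀
  have hs : 0 < √(1 - rr b ^ 2) := Real.sqrt_pos.2 (sub_pos.2 (rr_sq_lt_one hb))
  have hr := rr_pos hb₀
  have : canonE b 1 0 1 = (aM b * (rr b * √(1 - rr b ^ 2)) : ℝ) := by
    simp [canonE_one, outer_apply, psi2]
  rw [this, Complex.zero_lt_real]
  positivity

end CanonicalFamily

lemma exists_perm_eq_canonE {b : ℝ} (hb : b ∈ Set.Ioc (1 / 16 : ℝ) (1 / 12))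
    {F : Fin 4 → Matrix (Fin 2) (Fin 2) ℂ} (hherm : ∀ x, (F x).IsHermitian)
    (hdet : ∀ x, (F x).det = 0) (htr : ∀ x, (F x).trace = (canonE b x).trace)
    (hmul : ∀ x y, x ≠ y → (F x * F y).trace = b) (hne : F 2 ≠ F 3)
    (hF₀ : F 0 = canonE b 0) (hF₁ : 0 ≤ F 1 0 1) :
    ∃ τ : Equiv.Perm (Fin 4), ∀ x, F (τ x) = canonE b x := by
  have hb₀ := pos_of_mem_Ioc hb
  have hdiag {x y : Fin 4} (hx : 0 ≠ x) (hxy : (F x).trace = (canonE b y).trace)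
      (hy : (canonE b 0 * canonE b y).trace = b) :
      F x 0 0 = canonE b y 0 0 ∧ F x 1 1 = canonE b y 1 1 := by
    refine diag_eq_of_trace_eq (a := aM b) (mod_cast (aM_pos_iff.2 hb₀).ne') hxy ?_
    rw [← canonE_zero, hy, ← hF₀, hmul 0 x hx]
  have hF₁ : F 1 = canonE b 1 := by
    obtain ⟨h₀, h₁⟩ := hdiag (by decide) (htr 1) (trace_canonE_zero_mul_one hb₀)
    exact eq_of_det_eq_of_nonneg (hherm 1) (isHermitian_canonE b 1)
      ((hdet 1).trans (det_canonE b 1).symm) h₀ h₁ hF₁ (canonE_one_zero_one_pos hb).le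
  have hmirror {x : Fin 4} (hx₀ : 0 ≠ x) (hx₁ : 1 ≠ x) (hx : (F x).trace = (canonE b 2).trace) :
      F x = canonE b 2 ∨ F x = canonE b 3 := by
    obtain ⟨h₀, h₁⟩ := hdiag hx₀ hx (trace_canonE_zero_mul_two hb.2)
    rw [canonE_three]
    refine eq_or_eq_transpose_of_det_eq (hherm x) (isHermitian_canonE b 2) (isHermitian_canonE b 1)
      ((hdet x).trans (det_canonE b 2).symm) h₀ h₁ (canonE_one_zero_one_pos hb) ?_
    rw [trace_canonE_one_mul_two hb, ← hF₁, hmul 1 x hx₁]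
  have hF₂ := hmirror (by decide) (by decide) (htr 2)
  have hF₃ := hmirror (by decide) (by decide) ((htr 3).trans (by simp [canonE_three]))
  rcases hF₂ with hF₂ | hF₂ <;> rcases hF₃ with hF₃ | hF₃
  · exact absurd (hF₂.trans hF₃.symm) hne
  · exact ⟨1, fun x => by fin_cases x <;> assumption⟩
  · exact ⟨Equiv.swap 2 3, fun x => by fin_cases x <;> assumption⟩
  · exact absurd (hF₂.trans hF₃.symm) hne

namespace IsSemiSIC

variable {b : ℝ} {E : Fin (2 ^ 2) → Matrix (Fin 2) (Fin 2) ℂ}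

lemma re_trace_eq_sq_add_three_mul (hE : IsSemiSIC 2 b E) (x : Fin (2 ^ 2)) :
    (E x).trace.re = (E x).trace.re ^ 2 + 3 * b := by
  simpa using hE.re_trace_eq_sq_add x

lemma le_one_twelfth (hE : IsSemiSIC 2 b E) : b ≤ 1 / 12 := by
  nlinarith [hE.re_trace_eq_sq_add_three_mul 0, sq_nonneg ((E 0).trace.re - 1 / 2)]

lemma exists_perm_re_trace_eq (hE : IsSemiSIC 2 b E) :
    ∃ σ : Equiv.Perm (Fin 4), ∀ x, (E (σ x)).trace.re = ![aM b, aM b, aP b, aP b] x := by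
  obtain ⟨σ, hσ⟩ := exists_perm_comp_eq (t := fun x => (E x).trace.re) (aM_le_aP b)
    (fun x => eq_aM_or_eq_aP hE.le_one_twelfth (hE.re_trace_eq_sq_add_three_mul x))
    (by rw [aM_add_aP, mul_one]; exact hE.sum_re_trace)
  exact ⟨σ, congrFun hσ⟩

lemma mem_Ioc (hE : IsSemiSIC 2 b E) : b ∈ Set.Ioc (1 / 16 : ℝ) (1 / 12) := by
  obtain ⟨σ, hσ⟩ := hE.exists_perm_re_trace_eq
  have h₀ : (E (σ 0)).trace.re = aM b := hσ 0
  have h₁ : (E (σ 1)).trace.re = aM b := hσ 1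
  have hb : 0 < b := aM_pos_iff.1 (h₀ ▸ (Complex.lt_def.1 (hE.trace_pos (σ 0))).1)
  have hlt : b < aM b ^ 2 := by
    have := hE.two_mul_lt_sq_add_sq (σ.injective.ne (show (0 : Fin 4) ≠ 1 by decide))
    rw [h₀, h₁] at this
    linarith
  exact ⟨(lt_aM_sq_iff hb.le hE.le_one_twelfth).1 hlt, hE.le_one_twelfth⟩

end IsSemiSIC

theorem unitary_equiv_canonE (b : ℝ)
    (G : Fin (2 ^ 2) → Matrix (Fin 2) (Fin 2) ℂ) (hG : IsSemiSIC 2 b G) :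
    b ∈ Set.Ioc (1 / 16 : ℝ) (1 / 12) ∧
    ∃ U ∈ Matrix.unitaryGroup (Fin 2) ℂ, ∃ σ : Equiv.Perm (Fin 4),
      ∀ x : Fin 4, (U : Matrix (Fin 2) (Fin 2) ℂ) * G (σ x) *
        (U : Matrix (Fin 2) (Fin 2) ℂ)ᴴ = canonE b x := by
  have hb := hG.mem_Ioc
  obtain ⟨σ, hσ⟩ := hG.exists_perm_re_trace_eq
  have htr (x : Fin 4) : (G (σ x)).trace = (canonE b x).trace := by
    rw [trace_canonE hb, ← hσ, hG.ofReal_re_trace]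
  have hdet (x : Fin 4) : (G (σ x)).det = 0 := det_eq_zero_of_rank_le_one (hG.rank_le_one _)
  obtain ⟨U, hU₀, hU₁⟩ := exists_conjStarAlgAut_eq_and_nonneg (hG.isHermitian (σ 0)) (hdet 0)
    (G (σ 1))
  set φ := Unitary.conjStarAlgAut ℂ (Matrix (Fin 2) (Fin 2) ℂ) U
  obtain ⟨τ, hτ⟩ := exists_perm_eq_canonE hb (F := fun x => φ (G (σ x)))
    (fun x => (hG.isHermitian (σ x)).isSelfAdjoint.map φ)
    (fun x => by rw [det_conjStarAlgAut, hdet])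
    (fun x => by rw [trace_conjStarAlgAut, htr])
    (fun x y hxy => by
      rw [← map_mul, trace_conjStarAlgAut, hG.trace_mul (σ.injective.ne hxy)])
    (φ.injective.ne (hG.injective.ne (σ.injective.ne (by decide))))
    (by rw [hU₀, htr, trace_canonE hb, canonE_zero]; rfl) hU₁
  exact ⟨hb, U, U.2, τ.trans σ, hτ⟩
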